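/- Let G be a finite simple chordal graph that is P_9-free, IR an irredundant set of G, and A ⊆ RN = V(G) \ IR. Then A ∈ D_RN(G) if and only if Priv_IR(A,a) ≠ ∅ for every a ∈ A and, for every irredundant component C_i of G, there exists D_i ⊆ C_i such that D_i dominates C_i \ N(A) and D_i does not dominate Priv_IR(A,x) for any x ∈ R_i(A). -/

import Mathlib

variable {V : Type*}

/-- The closed neighborhood `N[x]` of a vertex. -/
def cnbr (G : SimpleGraph V) (x : V) : Set V := insert x (G.neighborSet x)

/-- `N[X] = ⋃ x ∈ X, N[x]`. -/
def cnbrSet (G : SimpleGraph V) (X : Set V) : Set V := ⋃ x ∈ X, cnbr G x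

/-- `N(X) = N[X] \ X`. -/
def onbrSet (G : SimpleGraph V) (X : Set V) : Set V := cnbrSet G X \ X

/-- `D` dominates `X` if `X ⊆ N[D]`. -/
def Dominates (G : SimpleGraph V) (D X : Set V) : Prop := X ⊆ cnbrSet G D

/-- `D` is a minimal dominating set of `G`. -/
def IsMinDomSet (G : SimpleGraph V) (D : Set V) : Prop :=
  Dominates G D Set.univ ∧ ∀ D' : Set V, D' ⊂ D → ¬ Dominates G D' Set.univ

/-- `Priv(D, x)`: private neighbors of `x` w.r.t. `D`. -/
def priv (G : SimpleGraph V) (D : Set V) (x : V) : Set V := {u | cnbr G u ∩ D = {x}}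

/-- `IR` is an irredundant set of `G`. -/
def IsIrredundantSet (G : SimpleGraph V) (IR : Set V) : Prop :=
  (∀ v : V, ∃ x ∈ IR, cnbr G x ⊆ cnbr G v) ∧
  (∀ x ∈ IR, ∀ v : V, ¬ cnbr G v ⊂ cnbr G x) ∧
  (∀ x ∈ IR, ∀ y ∈ IR, x ≠ y → cnbr G x ≠ cnbr G y)

/-- `Priv_IR(D, x) = Priv(D, x) ∩ IR`. -/
def privIR (G : SimpleGraph V) (IR D : Set V) (x : V) : Set V := priv G D x ∩ IR

/-- `A ∈ D_RN(G)`: `A` is the intersection of a minimal dominating set with `RN = V \ IR`. -/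
def memDRN (G : SimpleGraph V) (IR A : Set V) : Prop :=
  ∃ D : Set V, IsMinDomSet G D ∧ A = D ∩ IRᶜ

/-- `G` is `P_k`-free: it has no induced path on `k` vertices. -/
def PkFree (G : SimpleGraph V) (k : ℕ) : Prop :=
  ¬ ∃ f : Fin k → V, Function.Injective f ∧
      ∀ i j : Fin k, G.Adj (f i) (f j) ↔ (i.val + 1 = j.val ∨ j.val + 1 = i.val)

/-- `G` is chordal: no induced cycle on `n ≥ 4` vertices. -/
def Chordal (G : SimpleGraph V) : Prop :=
  ∀ n : ℕ, 4 ≤ n → ¬ ∃ f : ZMod n → V, Function.Injective f ∧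
      ∀ i j : ZMod n, G.Adj (f i) (f j) ↔ (i = j + 1 ∨ j = i + 1)

/-- `C` is a connected component of the subgraph of `G` induced by `S`. -/
def IsCompOf (G : SimpleGraph V) (S C : Set V) : Prop :=
  C ⊆ S ∧ C.Nonempty ∧ (G.induce C).Connected ∧
    ∀ x ∈ C, ∀ y ∈ S, G.Adj x y → y ∈ C

/-- `B(A)`: the elements of `A` having an irredundant private neighbor in some irredundant
component entirely contained in `N(A)`. -/
def Bset (G : SimpleGraph V) (IR A : Set V) : Set V :=
  {a ∈ A | ∃ C : Set V, IsCompOf G IR C ∧ C ⊆ onbrSet G A ∧ (privIR G IR A a ∩ C).Nonempty}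

/-- Domination inside the subgraph induced by `C`: every `u ∈ X` equals, or is adjacent
(within `C`) to, some `d ∈ D`.  For `D, X ⊆ C` this is domination in `G[C]`. -/
def domIn (G : SimpleGraph V) (C D X : Set V) : Prop :=
  ∀ u ∈ X, ∃ d ∈ D, u = d ∨ (G.Adj d u ∧ d ∈ C ∧ u ∈ C)

/-! Dominating `G` amounts to dominating `IR`, and minimality of a dominating set amounts to each
of its elements having an irredundant private neighbor. Hence a minimal dominating set `D` with
`D \ IR = A` consists of `A` and one subset of each component of `G[IR]`. Independent choices of
these subsets fit together if, for each `a ∈ R(A)`, the irredundant private neighbors of `a` lie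
in one component. This is where `P₉`-freeness enters: such an `a` is mixed on every component
containing one of these neighbors, each component on which `a` is mixed contains the second vertex
of an induced path on five vertices starting at `a`, and in a chordal graph two such paths
entering distinct components join to an induced path on nine vertices. -/

section Domination

variable {G : SimpleGraph V} {A D D' X : Set V} {x y u d : V}

lemma mem_cnbr : y ∈ cnbr G x ↔ y = x ∨ G.Adj x y := Iff.rfl

lemma mem_cnbr_self : x ∈ cnbr G x := Or.inl rfl

lemma mem_cnbr_comm : y ∈ cnbr G x ↔ x ∈ cnbr G y := by
  rw [mem_cnbr, mem_cnbr, eq_comm, G.adj_comm]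

lemma adj_of_mem_cnbr_of_ne (h : y ∈ cnbr G x) (hne : y ≠ x) : G.Adj x y :=
  (mem_cnbr.1 h).resolve_left hne

lemma mem_cnbrSet : u ∈ cnbrSet G D ↔ (cnbr G u ∩ D).Nonempty := by
  simp only [cnbrSet, Set.mem_iUnion, mem_cnbr_comm (y := u), exists_prop, and_comm (a := _ ∈ D)]
  rfl

lemma dominates_iff : Dominates G D X ↔ ∀ u ∈ X, (cnbr G u ∩ D).Nonempty :=
  forall₂_congr fun _ _ => mem_cnbrSet

lemma mem_onbrSet_iff_of_notMem (hu : u ∉ A) : u ∈ onbrSet G A ↔ (cnbr G u ∩ A).Nonempty :=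
  (and_iff_left hu).trans mem_cnbrSet

lemma Dominates.mono (h : Dominates G D' X) (hD : D' ⊆ D) : Dominates G D X :=
  dominates_iff.2 fun u hu => (dominates_iff.1 h u hu).mono (Set.inter_subset_inter_right _ hD)

lemma priv_subset_priv_of_subset (hD : D' ⊆ D) (hx : x ∈ D') : priv G D x ⊆ priv G D' x := by
  intro u hu
  have hu : cnbr G u ∩ D = {x} := hu
  refine Set.Subset.antisymm ?_ ?_
  · exact (Set.inter_subset_inter_right _ hD).trans hu.subset
  · exact Set.singleton_subset_iff.2 ⟨(hu.symm.subset rfl).1, hx⟩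

lemma mem_priv_iff_of_nonempty (hu : (cnbr G u ∩ D).Nonempty) :
    u ∈ priv G D d ↔ ¬ (cnbr G u ∩ (D \ {d})).Nonempty := by
  rw [← Set.inter_sdiff_assoc, Set.not_nonempty_iff_eq_empty, Set.sdiff_eq_empty,
    hu.subset_singleton_iff]
  rfl

theorem minimal_dominates_iff :
    Minimal (Dominates G · X) D ↔ Dominates G D X ∧ ∀ d ∈ D, (priv G D d ∩ X).Nonempty := by
  rw [Set.minimal_iff_forall_sdiff_singleton fun _ _ h hD => h.mono hD]
  refine and_congr_right fun hD => forall₂_congr fun d _ => ?_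
  have mem_priv_iff : ∀ u ∈ X, u ∈ priv G D d ↔ ¬ (cnbr G u ∩ (D \ {d})).Nonempty :=
    fun u hu => mem_priv_iff_of_nonempty (dominates_iff.1 hD u hu)
  rw [dominates_iff, Set.inter_comm]
  push Not
  exact exists_congr fun u => and_congr_right fun hu =>
    ((mem_priv_iff u hu).trans Set.not_nonempty_iff_eq_empty).symm

lemma exists_subset_minimal_dominates (hfin : D.Finite) (hD : Dominates G D X) :
    ∃ E ⊆ D, Minimal (Dominates G · X) E := by
  have hfin' : {E ∈ 𝒫 D | Dominates G E X}.Finite := hfin.powerset.subset (Set.sep_subset _ _)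
  obtain ⟨E, -, hE⟩ := hfin'.exists_le_minimal ⟨Set.Subset.rfl, hD⟩
  exact ⟨E, hE.prop.1, hE.prop.2, fun E' hE' hle => hE.le_of_le ⟨hle.trans hE.prop.1, hE'⟩ hle⟩

end Domination

section Irredundant

variable {G : SimpleGraph V} {IR D : Set V} {a b : V}

lemma IsIrredundantSet.dominates_univ_iff (hIR : IsIrredundantSet G IR) :
    Dominates G D Set.univ ↔ Dominates G D IR := by
  refine ⟨fun h => (Set.subset_univ IR).trans h, fun h => dominates_iff.2 fun v _ => ?_⟩
  obtain ⟨x, hx, hxv⟩ := hIR.1 v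
  exact (dominates_iff.1 h x hx).mono (Set.inter_subset_inter_left _ hxv)

theorem IsIrredundantSet.isMinDomSet_iff (hIR : IsIrredundantSet G IR) :
    IsMinDomSet G D ↔ Dominates G D IR ∧ ∀ d ∈ D, (privIR G IR D d).Nonempty := by
  rw [IsMinDomSet, ← Set.minimal_iff_forall_ssubset (P := (Dominates G · Set.univ))]
  simp only [hIR.dominates_univ_iff, minimal_dominates_iff, privIR]

lemma IsIrredundantSet.cnbr_subset_cnbr_iff (hIR : IsIrredundantSet G IR) (ha : a ∈ IR)
    (hb : b ∈ IR) : cnbr G b ⊆ cnbr G a ↔ b = a := by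
  refine ⟨fun h => by_contra fun hne => ?_, fun h => h ▸ Set.Subset.rfl⟩
  exact h.eq_or_ssubset.elim (hIR.2.2 b hb a ha hne) (hIR.2.1 a ha b)

end Irredundant

section Components

variable {G : SimpleGraph V} {S C C' : Set V} {u x y : V}

lemma IsCompOf.mem_of_mem_cnbr (hC : IsCompOf G S C) (hx : x ∈ C) (hy : y ∈ S)
    (hxy : y ∈ cnbr G x) : y ∈ C :=
  hxy.elim (fun h => h ▸ hx) (hC.2.2.2 x hx y hy)

lemma IsCompOf.exists_adj_mem_notMem (hC : IsCompOf G S C) {T : Set V} (hx : x ∈ C) (hxT : x ∈ T)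
    (hy : y ∈ C) (hyT : y ∉ T) : ∃ a ∈ C, ∃ b ∈ C, G.Adj a b ∧ a ∈ T ∧ b ∉ T := by
  obtain ⟨w⟩ := hC.2.2.1.preconnected ⟨x, hx⟩ ⟨y, hy⟩
  obtain ⟨e, -, hfst, hsnd⟩ := w.exists_boundary_dart {z | z.1 ∈ T} hxT hyT
  exact ⟨e.fst, e.fst.2, e.snd, e.snd.2, e.adj, hfst, hsnd⟩

lemma IsCompOf.subset_of_mem (hC : IsCompOf G S C) (hC' : IsCompOf G S C') (hu : u ∈ C)
    (hu' : u ∈ C') : C ⊆ C' := by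
  intro y hy
  by_contra hy'
  obtain ⟨a, -, b, hb, hab, ha', hb'⟩ := hC.exists_adj_mem_notMem hu hu' hy hy'
  exact hb' (hC'.2.2.2 a ha' b (hC.1 hb) hab)

lemma IsCompOf.eq_of_mem (hC : IsCompOf G S C) (hC' : IsCompOf G S C') (hu : u ∈ C)
    (hu' : u ∈ C') : C = C' :=
  (hC.subset_of_mem hC' hu hu').antisymm (hC'.subset_of_mem hC hu' hu)

lemma exists_isCompOf_mem (hu : u ∈ S) : ∃ C, IsCompOf G S C ∧ u ∈ C := by
  let 𝒯 : Set (Set V) := {T | T ⊆ S ∧ u ∈ T ∧ (G.induce T).Connected}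
  have singleton_mem : {u} ∈ 𝒯 := by
    refine ⟨Set.singleton_subset_iff.2 hu, rfl, ?_⟩
    rw [SimpleGraph.induce_singleton_eq_top]
    exact SimpleGraph.connected_top
  refine ⟨⋃₀ 𝒯, ⟨Set.sUnion_subset fun T hT => hT.1, ⟨u, {u}, singleton_mem, rfl⟩, ?_, ?_⟩,
    {u}, singleton_mem, rfl⟩
  · exact SimpleGraph.induce_sUnion_connected_of_pairwise_not_disjoint ⟨_, singleton_mem⟩
      (fun hT hT' => ⟨u, hT.2.1, hT'.2.1⟩) fun hT => hT.2.2
  · rintro x ⟨T, ⟨hTS, huT, hT⟩, hxT⟩ y hy hxy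
    refine ⟨T ∪ {x, y}, ⟨?_, Or.inl huT, ?_⟩, by simp⟩
    · exact Set.union_subset hTS (Set.pair_subset (hTS hxT) hy)
    · exact SimpleGraph.induce_union_connected hT.preconnected
        (SimpleGraph.induce_pair_connected_of_adj hxy).preconnected ⟨x, hxT, Or.inl rfl⟩

end Components

section InducedPaths

variable {G : SimpleGraph V}

/-- `a`, `b`, `c` is an induced path on three vertices; `a ∉ N[c]` says at once that the endpoints
are distinct and nonadjacent. -/
def IsInducedP3 (G : SimpleGraph V) (a b c : V) : Prop :=
  G.Adj a b ∧ G.Adj b c ∧ a ∉ cnbr G c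

lemma IsInducedP3.symm {a b c : V} (h : IsInducedP3 G a b c) : IsInducedP3 G c b a :=
  ⟨h.2.1.symm, h.1.symm, fun hca => h.2.2 (mem_cnbr_comm.1 hca)⟩

/-- The terms `v 0, …, v (n - 1)` of a sequence of vertices form, in this order, an induced path;
later terms are ignored, so that subpaths are obtained by shifting `v` or decreasing `n`. -/
def IsInducedPath (G : SimpleGraph V) (n : ℕ) (v : ℕ → V) : Prop :=
  ∀ i j, i < j → j < n → v i ≠ v j ∧ (G.Adj (v i) (v j) ↔ i + 1 = j)

lemma nonempty_embedding_of_forall_lt {ι : Type*} [LinearOrder ι] {H : SimpleGraph ι} (f : ι → V)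
    (hf : ∀ i j, i < j → f i ≠ f j ∧ (G.Adj (f i) (f j) ↔ H.Adj i j)) : Nonempty (H ↪g G) := by
  refine ⟨⟨⟨f, .of_lt_imp_ne fun i j hij => (hf i j hij).1⟩, fun {i j} => ?_⟩⟩
  rcases lt_trichotomy i j with hij | rfl | hji
  · exact (hf i j hij).2
  · simp
  · rw [G.adj_comm, H.adj_comm]
    exact (hf j i hji).2

lemma PkFree.not_isInducedPath {k : ℕ} (hG : PkFree G k) (v : ℕ → V) : ¬ IsInducedPath G k v := by
  intro hv
  obtain ⟨f⟩ := nonempty_embedding_of_forall_lt (H := SimpleGraph.pathGraph k) (fun i => v i)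
    fun i j hij => ⟨(hv i j hij j.2).1, by
      rw [(hv i j hij j.2).2, SimpleGraph.pathGraph_adj]
      omega⟩
  exact hG ⟨f, f.injective, fun i j => by rw [f.map_adj_iff, SimpleGraph.pathGraph_adj]⟩

lemma Chordal.isEmpty_cycleGraph_embedding (hG : Chordal G) {n : ℕ} (hn : 4 ≤ n) :
    IsEmpty (SimpleGraph.cycleGraph n ↪g G) := by
  refine ⟨fun f => ?_⟩
  obtain ⟨m, rfl⟩ : ∃ m, n = m + 2 := ⟨n - 2, by omega⟩
  have adj_iff (i j : Fin (m + 2)) :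
      (SimpleGraph.cycleGraph (m + 2)).Adj i j ↔ i = j + 1 ∨ j = i + 1 := by
    rw [SimpleGraph.cycleGraph_adj, sub_eq_iff_eq_add', sub_eq_iff_eq_add']
  -- `ZMod (m + 2)` is definitionally `Fin (m + 2)`.
  exact hG (m + 2) hn ⟨f, f.injective, fun i j => f.map_adj_iff.trans (adj_iff i j)⟩

lemma cycleGraph_adj_iff_of_lt {n : ℕ} {i j : Fin n} (hij : i < j) :
    (SimpleGraph.cycleGraph n).Adj i j ↔ i.val + 1 = j ∨ i.val = 0 ∧ j.val + 1 = n := by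
  rw [SimpleGraph.cycleGraph_adj', Fin.sub_val_of_le hij.le, Fin.coe_sub_iff_lt.2 hij]
  omega

/-- Only the pair of ends is in question, and an edge between them would close an induced cycle. -/
lemma Chordal.isInducedPath_succ (hG : Chordal G) {n : ℕ} (hn : 3 ≤ n) {v : ℕ → V}
    (hinit : IsInducedPath G n v) (htail : IsInducedPath G n fun i => v (i + 1)) :
    IsInducedPath G (n + 1) v := by
  have of_ne_ends : ∀ i j, i < j → j < n + 1 → ¬ (i = 0 ∧ j = n) →
      v i ≠ v j ∧ (G.Adj (v i) (v j) ↔ i + 1 = j) := by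
    intro i j hij hj hne
    by_cases hjn : j < n
    · exact hinit i j hij hjn
    · obtain ⟨i, rfl⟩ : ∃ k, i = k + 1 := ⟨i - 1, by omega⟩
      obtain ⟨j, rfl⟩ : ∃ k, j = k + 1 := ⟨j - 1, by omega⟩
      simpa using htail i j (by omega) (by omega)
  have ends_ne : v 0 ≠ v n := by
    intro heq
    have h01 : G.Adj (v 0) (v 1) := (hinit 0 1 (by omega) (by omega)).2.2 rfl
    have h1n := (of_ne_ends 1 n (by omega) (by omega) (by omega)).2.1 (heq ▸ h01.symm)
    omega
  have ends_not_adj : ¬ G.Adj (v 0) (v n) := by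
    intro hadj
    suffices Nonempty (SimpleGraph.cycleGraph (n + 1) ↪g G) from
      not_isEmpty_iff.2 this (hG.isEmpty_cycleGraph_embedding (by omega))
    refine nonempty_embedding_of_forall_lt (fun i => v i) fun i j hij => ?_
    rw [cycleGraph_adj_iff_of_lt hij]
    by_cases hends : i.val = 0 ∧ j.val = n
    · rw [hends.1, hends.2]
      exact ⟨ends_ne, by simp [hadj]⟩
    · obtain ⟨hne, hadj_iff⟩ := of_ne_ends i j hij j.2 hends
      refine ⟨hne, hadj_iff.trans ?_⟩
      omega
  intro i j hij hj
  by_cases hends : i = 0 ∧ j = n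
  · obtain ⟨rfl, rfl⟩ := hends
    exact ⟨ends_ne, by simp only [ends_not_adj, false_iff]; omega⟩
  · exact of_ne_ends i j hij hj hends

theorem Chordal.isInducedPath_of_forall_isInducedP3 (hG : Chordal G) {n : ℕ} (hn : 3 ≤ n)
    {v : ℕ → V} (hv : ∀ i, i + 2 < n → IsInducedP3 G (v i) (v (i + 1)) (v (i + 2))) :
    IsInducedPath G n v := by
  induction n, hn using Nat.le_induction generalizing v with
  | base =>
    obtain ⟨h01, h12, h02⟩ := hv 0 (by omega)
    have h02 : v 0 ≠ v 2 ∧ ¬ G.Adj (v 0) (v 2) := by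
      rwa [mem_cnbr, G.adj_comm, not_or] at h02
    intro i j hij hj
    obtain ⟨rfl, rfl⟩ | ⟨rfl, rfl⟩ | ⟨rfl, rfl⟩ :
        i = 0 ∧ j = 1 ∨ i = 1 ∧ j = 2 ∨ i = 0 ∧ j = 2 := by omega
    · exact ⟨h01.ne, iff_of_true h01 rfl⟩
    · exact ⟨h12.ne, iff_of_true h12 rfl⟩
    · exact ⟨h02.1, iff_of_false h02.2 (by omega)⟩
  | succ n hn ih =>
    exact hG.isInducedPath_succ hn (ih fun i hi => hv i (by omega))
      (ih fun i hi => hv (i + 1) (by omega))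

end InducedPaths

section MixedComponents

variable {G : SimpleGraph V} {IR C C' : Set V} {x a b : V}

/-- `x` is mixed on `C`: it has both a neighbor and a nonneighbor in `C`. -/
def IsMixedOn (G : SimpleGraph V) (x : V) (C : Set V) : Prop :=
  (∃ y ∈ C, G.Adj x y) ∧ ∃ z ∈ C, ¬ G.Adj x z

lemma IsIrredundantSet.exists_isInducedP3 (hIR : IsIrredundantSet G IR) (ha : a ∈ IR) (hb : b ∈ IR)
    (hab : G.Adj a b) : ∃ z, IsInducedP3 G a b z := by
  obtain ⟨z, hzb, hza⟩ := Set.not_subset.1 (mt (hIR.cnbr_subset_cnbr_iff ha hb).1 hab.ne')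
  refine ⟨z, hab, adj_of_mem_cnbr_of_ne hzb ?_, fun h => hza (mem_cnbr_comm.1 h)⟩
  rintro rfl
  exact hza (Or.inr hab)

/-- The vertex after `b` need not be in `IR`; an irredundant `z'` with `N[z'] ⊆ N[z]` then replaces
it or prolongs the path beyond it. -/
lemma IsIrredundantSet.exists_isInducedP3_isInducedP3 (hIR : IsIrredundantSet G IR) (ha : a ∈ IR)
    (hb : b ∈ IR) (hab : G.Adj a b) : ∃ z w, IsInducedP3 G a b z ∧ IsInducedP3 G b z w := by
  obtain ⟨z, -, hbz, haz⟩ := hIR.exists_isInducedP3 ha hb hab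
  obtain ⟨z', hz', hz'z⟩ := hIR.1 z
  have haz' : a ∉ cnbr G z' := fun h => haz (hz'z h)
  by_cases hbz' : b ∈ cnbr G z'
  · have hadj : G.Adj b z' := by
      refine (adj_of_mem_cnbr_of_ne hbz' ?_).symm
      rintro rfl
      exact haz' (Or.inr hab.symm)
    obtain ⟨w, hw⟩ := hIR.exists_isInducedP3 hb hz' hadj
    exact ⟨z', w, ⟨hab, hadj, haz'⟩, hw⟩
  · have hadj : G.Adj z z' := by
      refine adj_of_mem_cnbr_of_ne (hz'z mem_cnbr_self) ?_
      rintro rfl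
      exact hbz' (Or.inr hbz.symm)
    exact ⟨z, z', ⟨hab, hbz, haz⟩, hbz, hadj, hbz'⟩

lemma IsMixedOn.exists_isInducedP3 (hIR : IsIrredundantSet G IR) (hC : IsCompOf G IR C)
    (hx : x ∉ IR) (hxC : IsMixedOn G x C) : ∃ c₁ ∈ C, ∃ c₂ c₃ c₄,
      IsInducedP3 G x c₁ c₂ ∧ IsInducedP3 G c₁ c₂ c₃ ∧ IsInducedP3 G c₂ c₃ c₄ := by
  obtain ⟨⟨y, hy, hxy⟩, z, hz, hxz⟩ := hxC
  obtain ⟨c₁, hc₁, c₂, hc₂, hadj, hxc₁, hxc₂⟩ :=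
    hC.exists_adj_mem_notMem (T := G.neighborSet x) hy hxy hz hxz
  obtain ⟨c₃, c₄, h₁, h₂⟩ := hIR.exists_isInducedP3_isInducedP3 (hC.1 hc₁) (hC.1 hc₂) hadj
  refine ⟨c₁, hc₁, c₂, c₃, c₄, ⟨hxc₁, hadj, ?_⟩, h₁, h₂⟩
  rintro (rfl | h)
  · exact hx (hC.1 hc₂)
  · exact hxc₂ h.symm

theorem IsMixedOn.comp_unique (hch : Chordal G) (hP9 : PkFree G 9) (hIR : IsIrredundantSet G IR)
    (hC : IsCompOf G IR C) (hC' : IsCompOf G IR C') (hx : x ∉ IR) (hxC : IsMixedOn G x C)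
    (hxC' : IsMixedOn G x C') : C = C' := by
  by_contra hne
  obtain ⟨a₁, ha₁, a₂, a₃, a₄, h₁, h₂, h₃⟩ := hxC.exists_isInducedP3 hIR hC hx
  obtain ⟨b₁, hb₁, b₂, b₃, b₄, k₁, k₂, k₃⟩ := hxC'.exists_isInducedP3 hIR hC' hx
  have center : IsInducedP3 G a₁ x b₁ := by
    refine ⟨h₁.1.symm, k₁.1, fun h => hne ?_⟩
    exact hC.eq_of_mem hC' ha₁ (hC'.mem_of_mem_cnbr hb₁ (hC.1 ha₁) h)
  let v : ℕ → V
    | 0 => a₄ | 1 => a₃ | 2 => a₂ | 3 => a₁ | 4 => x | 5 => b₁ | 6 => b₂ | 7 => b₃ | _ => b₄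
  refine hP9.not_isInducedPath v
    (hch.isInducedPath_of_forall_isInducedP3 (by norm_num) fun i hi => ?_)
  have hi : i < 7 := by omega
  interval_cases i
  exacts [h₃.symm, h₂.symm, h₁.symm, center, k₁, k₂, k₃]

end MixedComponents

section PrivateNeighbors

variable {G : SimpleGraph V} {IR A C : Set V} {a : V}

lemma adj_of_mem_privIR (hA : A ⊆ IRᶜ) (ha : a ∈ A) {u : V} (hu : u ∈ privIR G IR A a) :
    G.Adj a u := by
  have hua : a ∈ cnbr G u := (hu.1.symm.subset rfl).1
  refine (adj_of_mem_cnbr_of_ne hua ?_).symm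
  rintro rfl
  exact hA ha hu.2

lemma isMixedOn_of_notMem_Bset (hA : A ⊆ IRᶜ) (ha : a ∈ A \ Bset G IR A) (hC : IsCompOf G IR C)
    (hne : (privIR G IR A a ∩ C).Nonempty) : IsMixedOn G a C := by
  obtain ⟨u, hu, huC⟩ := hne
  have hCA : ¬ C ⊆ onbrSet G A := fun h => ha.2 ⟨ha.1, C, hC, h, u, hu, huC⟩
  obtain ⟨y, hy, hyA⟩ := Set.not_subset.1 hCA
  refine ⟨⟨u, huC, adj_of_mem_privIR hA ha.1 hu⟩, y, hy, fun h => hyA ?_⟩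
  exact (mem_onbrSet_iff_of_notMem fun hyA' => hA hyA' (hC.1 hy)).2 ⟨a, Or.inr h.symm, ha.1⟩

theorem privIR_subset_of_notMem_Bset (hch : Chordal G) (hP9 : PkFree G 9)
    (hIR : IsIrredundantSet G IR) (hA : A ⊆ IRᶜ) (ha : a ∈ A \ Bset G IR A)
    (hC : IsCompOf G IR C) (hne : (privIR G IR A a ∩ C).Nonempty) : privIR G IR A a ⊆ C := by
  intro u hu
  obtain ⟨C', hC', huC'⟩ := exists_isCompOf_mem (G := G) hu.2
  have hmix := isMixedOn_of_notMem_Bset hA ha hC hne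
  have hmix' := isMixedOn_of_notMem_Bset hA ha hC' ⟨u, hu, huC'⟩
  exact hmix.comp_unique hch hP9 hIR hC hC' (hA ha.1) hmix' ▸ huC'

end PrivateNeighbors

section Extension

variable {G : SimpleGraph V} {IR A C : Set V} {F : Set V → Set V} {a d u : V}

/-- The candidate dominating set: `A` together with the chosen subset `F C` of every irredundant
component `C`. The values of `F` at other sets are ignored. -/
def extendByComps (G : SimpleGraph V) (IR A : Set V) (F : Set V → Set V) : Set V :=
  A ∪ ⋃ C ∈ {C | IsCompOf G IR C}, F C

lemma cnbr_inter_extendByComps (hF : ∀ C, IsCompOf G IR C → F C ⊆ C) (hC : IsCompOf G IR C)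
    (hu : u ∈ C) : cnbr G u ∩ extendByComps G IR A F = cnbr G u ∩ (A ∪ F C) := by
  refine Set.Subset.antisymm ?_ ?_
  · rintro d ⟨hdu, hdA | hd⟩
    · exact ⟨hdu, Or.inl hdA⟩
    · obtain ⟨C', hC', hdC'⟩ := Set.mem_iUnion₂.1 hd
      have hdC : d ∈ C := hC.mem_of_mem_cnbr hu (hC'.1 (hF C' hC' hdC')) hdu
      have hCC' : C = C' := hC.eq_of_mem hC' hdC (hF C' hC' hdC')
      exact ⟨hdu, Or.inr (hCC' ▸ hdC')⟩
  · exact Set.inter_subset_inter_right _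
      (Set.union_subset_union_right _ (Set.subset_biUnion_of_mem (u := F) hC))

lemma extendByComps_inter_compl (hF : ∀ C, IsCompOf G IR C → F C ⊆ C) (hA : A ⊆ IRᶜ) :
    extendByComps G IR A F ∩ IRᶜ = A := by
  have hIR : (⋃ C ∈ {C | IsCompOf G IR C}, F C) ⊆ IR :=
    Set.iUnion₂_subset fun C hC => (hF C hC).trans hC.1
  rw [extendByComps, Set.union_inter_distrib_right, Set.inter_eq_left.2 hA,
    (Set.disjoint_compl_right_iff_subset.2 hIR).inter_eq, Set.union_empty]

lemma dominates_extendByComps (hF : ∀ C, IsCompOf G IR C → F C ⊆ C)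
    (hdom : ∀ C, IsCompOf G IR C → Dominates G (F C) (C \ onbrSet G A)) (hA : A ⊆ IRᶜ) :
    Dominates G (extendByComps G IR A F) IR := by
  refine dominates_iff.2 fun u hu => ?_
  obtain ⟨C, hC, huC⟩ := exists_isCompOf_mem (G := G) hu
  rw [cnbr_inter_extendByComps hF hC huC]
  by_cases huA : u ∈ onbrSet G A
  · exact ((mem_onbrSet_iff_of_notMem fun h => hA h hu).1 huA).mono
      (Set.inter_subset_inter_right _ Set.subset_union_left)
  · exact (dominates_iff.1 (hdom C hC) u ⟨huC, huA⟩).mono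
      (Set.inter_subset_inter_right _ Set.subset_union_right)

lemma mem_privIR_extendByComps_of_notMem_cnbrSet (hF : ∀ C, IsCompOf G IR C → F C ⊆ C)
    (hC : IsCompOf G IR C) (huC : u ∈ C) (hu : u ∈ privIR G IR A a) (huF : u ∉ cnbrSet G (F C)) :
    u ∈ privIR G IR (extendByComps G IR A F) a := by
  refine ⟨?_, hu.2⟩
  have huA : cnbr G u ∩ A = {a} := hu.1
  change cnbr G u ∩ extendByComps G IR A F = {a}
  rw [cnbr_inter_extendByComps hF hC huC, Set.inter_union_distrib_left, huA,
    Set.not_nonempty_iff_eq_empty.1 (mt mem_cnbrSet.2 huF), Set.union_empty]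

lemma mem_privIR_extendByComps_of_mem_priv (hF : ∀ C, IsCompOf G IR C → F C ⊆ C) (hA : A ⊆ IRᶜ)
    (hC : IsCompOf G IR C) (hu : u ∈ priv G (F C) d ∩ (C \ onbrSet G A)) :
    u ∈ privIR G IR (extendByComps G IR A F) d := by
  obtain ⟨huF, huC, huA⟩ := hu
  refine ⟨?_, hC.1 huC⟩
  have huF : cnbr G u ∩ F C = {d} := huF
  have huA : cnbr G u ∩ A = ∅ := Set.not_nonempty_iff_eq_empty.1
    (mt (mem_onbrSet_iff_of_notMem fun h => hA h (hC.1 huC)).2 huA)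
  change cnbr G u ∩ extendByComps G IR A F = {d}
  rw [cnbr_inter_extendByComps hF hC huC, Set.inter_union_distrib_left, huA, huF, Set.empty_union]

/-- If `C ⊆ N(A)`, then nothing is left to dominate in `C`, and minimality forces `F C = ∅`. -/
lemma privIR_extendByComps_nonempty_of_mem_Bset (hF : ∀ C, IsCompOf G IR C → F C ⊆ C)
    (hmin : ∀ C, IsCompOf G IR C → Minimal (Dominates G · (C \ onbrSet G A)) (F C))
    (ha : a ∈ Bset G IR A) : (privIR G IR (extendByComps G IR A F) a).Nonempty := by
  obtain ⟨-, C, hC, hCA, u, hu, huC⟩ := ha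
  refine ⟨u, mem_privIR_extendByComps_of_notMem_cnbrSet hF hC huC hu fun huF => ?_⟩
  obtain ⟨d, -, hd⟩ := mem_cnbrSet.1 huF
  obtain ⟨w, -, hwC, hwA⟩ := (minimal_dominates_iff.1 (hmin C hC)).2 d hd
  exact hwA (hCA hwC)

theorem isMinDomSet_extendByComps (hIR : IsIrredundantSet G IR) (hA : A ⊆ IRᶜ)
    (hF : ∀ C, IsCompOf G IR C → F C ⊆ C)
    (hmin : ∀ C, IsCompOf G IR C → Minimal (Dominates G · (C \ onbrSet G A)) (F C))
    (hpriv : ∀ a ∈ A \ Bset G IR A,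
      ∃ C, IsCompOf G IR C ∧ ∃ u ∈ privIR G IR A a ∩ C, u ∉ cnbrSet G (F C)) :
    IsMinDomSet G (extendByComps G IR A F) := by
  refine hIR.isMinDomSet_iff.2
    ⟨dominates_extendByComps hF (fun C hC => (hmin C hC).prop) hA, ?_⟩
  rintro d (hdA | hd)
  · by_cases hdB : d ∈ Bset G IR A
    · exact privIR_extendByComps_nonempty_of_mem_Bset hF hmin hdB
    · obtain ⟨C, hC, u, ⟨hu, huC⟩, huF⟩ := hpriv d ⟨hdA, hdB⟩
      exact ⟨u, mem_privIR_extendByComps_of_notMem_cnbrSet hF hC huC hu huF⟩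
  · obtain ⟨C, hC, hdC⟩ := Set.mem_iUnion₂.1 hd
    obtain ⟨u, hu⟩ := (minimal_dominates_iff.1 (hmin C hC)).2 d hdC
    exact ⟨u, mem_privIR_extendByComps_of_mem_priv hF hA hC hu⟩

end Extension

section Restriction

variable {G : SimpleGraph V} {IR C D : Set V} {a : V}

lemma IsMinDomSet.exists_mem_privIR_inter_mem_priv (hIR : IsIrredundantSet G IR)
    (hD : IsMinDomSet G D) (ha : a ∈ D ∩ IRᶜ) :
    ∃ u ∈ privIR G IR (D ∩ IRᶜ) a, u ∈ priv G D a := by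
  obtain ⟨u, huD, hu⟩ := (hIR.isMinDomSet_iff.1 hD).2 a ha.1
  exact ⟨u, ⟨priv_subset_priv_of_subset Set.inter_subset_left ha huD, hu⟩, huD⟩

lemma IsMinDomSet.not_dominates_privIR (hIR : IsIrredundantSet G IR) (hD : IsMinDomSet G D)
    (hC : IsCompOf G IR C) (ha : a ∈ D ∩ IRᶜ) :
    ¬ Dominates G (D ∩ C) (privIR G IR (D ∩ IRᶜ) a) := by
  intro hdom
  obtain ⟨u, hu, huD⟩ := hD.exists_mem_privIR_inter_mem_priv hIR ha
  obtain ⟨d, hdu, hdD, hdC⟩ := dominates_iff.1 hdom u hu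
  have hda : d = a := huD.subset ⟨hdu, hdD⟩
  exact ha.2 (hC.1 (hda ▸ hdC))

lemma dominates_inter_comp (hD : Dominates G D IR) (hC : IsCompOf G IR C) :
    Dominates G (D ∩ C) (C \ onbrSet G (D ∩ IRᶜ)) := by
  refine dominates_iff.2 fun u ⟨huC, huA⟩ => ?_
  obtain ⟨d, hdu, hd⟩ := dominates_iff.1 hD u (hC.1 huC)
  have hdIR : d ∈ IR := by
    by_contra hdIR
    exact huA ((mem_onbrSet_iff_of_notMem fun h => h.2 (hC.1 huC)).2 ⟨d, hdu, hd, hdIR⟩)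
  exact ⟨d, hdu, hd, hC.mem_of_mem_cnbr huC hdIR hdu⟩

end Restriction

theorem stmt_10_general (G : SimpleGraph V) (hch : Chordal G) (hP9 : PkFree G 9)
    (IR : Set V) (hIR : IsIrredundantSet G IR) (hfin : ∀ C, IsCompOf G IR C → C.Finite)
    (A : Set V) (hA : A ⊆ IRᶜ) :
    memDRN G IR A ↔
      ((∀ a ∈ A, (privIR G IR A a).Nonempty) ∧
        ∀ C : Set V, IsCompOf G IR C →
          ∃ D ⊆ C, Dominates G D (C \ onbrSet G A) ∧
            ∀ x ∈ A \ Bset G IR A, (privIR G IR A x ∩ C).Nonempty →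
              ¬ Dominates G D (privIR G IR A x)) := by
  constructor
  · rintro ⟨D, hD, rfl⟩
    refine ⟨fun a ha => ?_, fun C hC => ⟨D ∩ C, Set.inter_subset_right, ?_, fun x hx _ => ?_⟩⟩
    · exact (hD.exists_mem_privIR_inter_mem_priv hIR ha).imp fun _ hu => hu.1
    · exact dominates_inter_comp (hIR.isMinDomSet_iff.1 hD).1 hC
    · exact hD.not_dominates_privIR hIR hC hx.1
  · rintro ⟨hpriv, hcomp⟩
    choose! D hDC hDdom hDpriv using hcomp
    have hmin (C : Set V) (hC : IsCompOf G IR C) :=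
      exists_subset_minimal_dominates ((hfin C hC).subset (hDC C hC)) (hDdom C hC)
    choose! F hFD hF using hmin
    have hFC (C : Set V) (hC : IsCompOf G IR C) : F C ⊆ C := (hFD C hC).trans (hDC C hC)
    refine ⟨_, isMinDomSet_extendByComps hIR hA hFC hF fun a ha => ?_,
      (extendByComps_inter_compl hFC hA).symm⟩
    obtain ⟨p, hp⟩ := hpriv a ha.1
    obtain ⟨C, hC, hpC⟩ := exists_isCompOf_mem (G := G) hp.2
    have hne : (privIR G IR A a ∩ C).Nonempty := ⟨p, hp, hpC⟩
    obtain ⟨u, hu, huF⟩ := Set.not_subset.1 fun h : Dominates G (F C) _ =>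
      hDpriv C hC a ha hne (h.mono (hFD C hC))
    exact ⟨C, hC, u, ⟨hu, privIR_subset_of_notMem_Bset hch hP9 hIR hA ha hC hne hu⟩, huF⟩

/-- In a `P₉`-free chordal graph, `A ∈ D_RN(G)` iff every `a ∈ A` has an
irredundant private neighbor and every irredundant component `C` has a subset `D` dominating
`C \ N(A)` without dominating `Priv_IR(A, x)` for any `x ∈ R_i(A)`. -/
theorem stmt_10 [Fintype V] (G : SimpleGraph V) (hch : Chordal G) (hP9 : PkFree G 9)
    (IR : Set V) (hIR : IsIrredundantSet G IR)
    (A : Set V) (hA : A ⊆ IRᶜ) :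
    memDRN G IR A ↔
      ((∀ a ∈ A, (privIR G IR A a).Nonempty) ∧
        ∀ C : Set V, IsCompOf G IR C →
          ∃ D ⊆ C, Dominates G D (C \ onbrSet G A) ∧
            ∀ x ∈ A \ Bset G IR A, (privIR G IR A x ∩ C).Nonempty →
              ¬ Dominates G D (privIR G IR A x)) :=
  stmt_10_general G hch hP9 IR hIR (fun C _ => C.toFinite) A hA
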